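/- Let V_obl be a subtractive oblivious adversary with fixed budget η ∈ (0,1) on a countable domain X, let α ≥ 1, ε, δ ∈ (0,1), m ∈ ℕ, let A : X* → Δ(X) be a learner, and let p be a distribution on X such that P_{S ∼ V_obl(p)^{m−⌈ηm⌉}}[d_TV(A(S), p) > α·η + ε] > δ. Then there exists a subtractive ground-truth-aware adaptive adversary V_adp : X* × Δ(X) → X* whose subtractive budget at sample size m equals ⌈ηm⌉/m such that P_{S∼p^m}[d_TV(A(V_adp(S, p)), p) > α·η + ε] > δ/2 (probability over the sample and the adversary's randomness). -/

import Mathlib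

open scoped ENNReal NNReal

/-- Total variation distance between two discrete distributions. -/
noncomputable def tv {X : Type*} (p q : PMF X) : ℝ :=
  (∑' x, |(p x).toReal - (q x).toReal|) / 2

/-- The distribution of an i.i.d. sample of size `m` from `p`, viewed as a multiset. -/
noncomputable def iid {X : Type*} (p : PMF X) : ℕ → PMF (Multiset X)
  | 0 => PMF.pure 0
  | n + 1 => (iid p n).bind fun s => p.map fun x => x ::ₘ s

/-- `|Q|^m` : first draw `q ∼ Q`, then an i.i.d. sample `S ∼ q^m`. -/
noncomputable def metaSample {X : Type*} (Q : PMF (PMF X)) (m : ℕ) : PMF (Multiset X) :=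
  Q.bind fun q => iid q m

/-- An adaptive adversary: a randomized map from samples (finite multisets) to samples. -/
abbrev Adversary (X : Type*) := Multiset X → PMF (Multiset X)

/-- `V(P)`: the distribution of `V S` for `S ∼ P` (including internal randomness). -/
noncomputable def advPush {X : Type*} (V : Adversary X) (P : PMF (Multiset X)) :
    PMF (Multiset X) := P.bind V

/-- An additive adversary only adds points: `S ⊆ V(S)` almost surely. -/
def IsAdditive {X : Type*} (V : Adversary X) : Prop :=
  ∀ S T, T ∈ (V S).support → S ≤ T

/-- A subtractive adversary only removes points: `V(S) ⊆ S` almost surely. -/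
def IsSubtractive {X : Type*} (V : Adversary X) : Prop :=
  ∀ S T, T ∈ (V S).support → T ≤ S

/-- Fixed constant budget `η`: `|V(S)|` depends only on `|S|` (via `c`), and for every `m`,
`η m − 1 < m·budget(V,m) ≤ η m` where `m·budget(V,m) = ||V(S)| − |S||`. -/
def FixedBudget {X : Type*} (V : Adversary X) (η : ℝ) : Prop :=
  ∃ c : ℕ → ℕ, (∀ S T, T ∈ (V S).support → Multiset.card T = c (Multiset.card S)) ∧
    ∀ m : ℕ, η * m - 1 < |(c m : ℝ) - m| ∧ |(c m : ℝ) - m| ≤ η * m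

/-- Fixed constant budget `η` for an additive adversary (`m·budget(V,m) = |V(S)| − |S|`). -/
def FixedBudgetAdd {X : Type*} (V : Adversary X) (η : ℝ) : Prop :=
  ∃ c : ℕ → ℕ, (∀ S T, T ∈ (V S).support → Multiset.card T = c (Multiset.card S)) ∧
    ∀ m : ℕ, η * m - 1 < (c m : ℝ) - m ∧ (c m : ℝ) - m ≤ η * m

/-- Fixed constant budget `η` for a subtractive adversary (`m·budget(V,m) = |S| − |V(S)|`). -/
def FixedBudgetSub {X : Type*} (V : Adversary X) (η : ℝ) : Prop :=
  ∃ c : ℕ → ℕ, (∀ S T, T ∈ (V S).support → Multiset.card T = c (Multiset.card S)) ∧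
    ∀ m : ℕ, η * m - 1 < (m : ℝ) - c m ∧ (m : ℝ) - c m ≤ η * m

/-- Probability of an event under a discrete distribution. -/
noncomputable def probEvent {β : Type*} (P : PMF β) (E : Set β) : ℝ≥0∞ :=
  P.toOuterMeasure E

/-- `A` with sample complexity `mc` learns the class `C` against adversary `V`,
up to error `bound + ε` with confidence `1 − δ` once `m ≥ mc ε δ`. -/
def RobustLearnerFor {X : Type*} (C : Set (PMF X)) (A : Multiset X → PMF X)
    (mc : ℝ → ℝ → ℕ) (V : Adversary X) (bound : ℝ) : Prop :=
  ∀ p ∈ C, ∀ ε δ : ℝ, 0 < ε → ε < 1 → 0 < δ → δ < 1 →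
    ∀ m : ℕ, mc ε δ ≤ m →
      1 - ENNReal.ofReal δ ≤
        probEvent ((iid p m).bind V) {T | tv (A T) p ≤ bound + ε}

/-- `C` is adaptively α-robustly learnable w.r.t. the single adversary `V` with budget `η`. -/
def RobustlyLearnableWrt {X : Type*} (C : Set (PMF X)) (α : ℝ)
    (V : Adversary X) (η : ℝ) : Prop :=
  ∃ A mc, RobustLearnerFor C A mc V (α * η)

/-- `V` (with budget `η`) is a universal α-adversary for `C`. -/
def UniversalAdversary {X : Type*} (C : Set (PMF X)) (α : ℝ)
    (V : Adversary X) (η : ℝ) : Prop :=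
  ¬ RobustlyLearnableWrt C α V η

/-- `C` is adaptively α-robustly learnable w.r.t. a class `𝒱` of adversaries
(each given with its budget). -/
def RobustlyLearnableWrtClass {X : Type*} (C : Set (PMF X)) (α : ℝ)
    (𝒱 : Set (Adversary X × ℝ)) : Prop :=
  ∃ A mc, ∀ Vη ∈ 𝒱, RobustLearnerFor C A mc Vη.1 (α * Vη.2)

/-- `C` is adaptively additively α-robustly learnable: one learner works simultaneously
against all additive adaptive adversaries with fixed constant budgets. -/
def AdditivelyRobustlyLearnable {X : Type*} (C : Set (PMF X)) (α : ℝ) : Prop :=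
  ∃ A mc, ∀ V : Adversary X, ∀ η : ℝ, 0 < η → η < 1 →
    IsAdditive V → FixedBudgetAdd V η → RobustLearnerFor C A mc V (α * η)

/-- `C` is adaptively subtractively α-robustly learnable. -/
def SubtractivelyRobustlyLearnable {X : Type*} (C : Set (PMF X)) (α : ℝ) : Prop :=
  ∃ A mc, ∀ V : Adversary X, ∀ η : ℝ, 0 < η → η < 1 →
    IsSubtractive V → FixedBudgetSub V η → RobustLearnerFor C A mc V (α * η)

/-- The pair `(V1, V2)` successfully `(γ,ζ)`-confuses `C`-generated samples of size `m`. -/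
def ConfusesPair {X : Type*} (C : Set (PMF X)) (V1 V2 : Adversary X)
    (γ ζ : ℝ) (m : ℕ) : Prop :=
  ∃ p ∈ C, ∃ Q : PMF (PMF X), Q.support ⊆ C ∧
    (∀ q ∈ Q.support, γ < tv p q) ∧
    tv (advPush V1 (metaSample Q m)) (advPush V2 (iid p m)) < ζ

/-- A single adversary `V` successfully `(γ,ζ)`-confuses `C`-generated samples of size `m`. -/
def Confuses {X : Type*} (C : Set (PMF X)) (V : Adversary X) (γ ζ : ℝ) (m : ℕ) : Prop :=
  ConfusesPair C V V γ ζ m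

/-- `p` is the distribution `p_{i,j,k} = (1 − 1/j)·δ_{(0,0)} + (1/j − 1/k)·U_{B_i×{2j+1}}
 + (1/k)·δ_{(i,2j+2)}` on `ℕ × ℕ`. -/
def IsPijk (B : ℕ → Finset ℕ) (i j k : ℕ) (p : PMF (ℕ × ℕ)) : Prop :=
  ∀ x : ℕ × ℕ,
    p x = (1 - ((j : ℝ≥0∞))⁻¹) * (if x = (0, 0) then 1 else 0)
      + (((j : ℝ≥0∞))⁻¹ - ((k : ℝ≥0∞))⁻¹) *
          (if x.1 ∈ B i ∧ x.2 = 2 * j + 1 then (((B i).card : ℝ≥0∞))⁻¹ else 0)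
      + ((k : ℝ≥0∞))⁻¹ * (if x = (i, 2 * j + 2) then 1 else 0)

/-- The class `C_g = {p_{i,j,g(j)} : i, j ∈ ℕ}` (for the meaningful parameters). -/
def Cg (B : ℕ → Finset ℕ) (g : ℕ → ℕ) : Set (PMF (ℕ × ℕ)) :=
  {p | ∃ i j : ℕ, 1 ≤ j ∧ j < g j ∧ (B i).Nonempty ∧ IsPijk B i j (g j) p}

/-- `g` is superlinear: `g(n)/n → ∞`. -/
def Superlinear (g : ℕ → ℕ) : Prop :=
  Filter.Tendsto (fun n => (g n : ℝ) / n) Filter.atTop Filter.atTop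

/-!
A sample of size `m` from a mixture `p = (1 - η) v + η r` arises by drawing the number
`j ∼ Bin(m, η)` of bad points, then `m - j` points from `v` and `j` points from `r`. If the
adversary could tell bad points from good ones, it would spend its budget `k = ⌈η m⌉` on the bad
points first and what is left of it on good ones; whenever `j ≤ k`, this leaves a sample of
`m - k` points from `v`. A multiset carries no such labels, but an adversary that knows `p` can draw
the remaining points from their conditional law given the whole sample.

It remains to see that `j ≤ k` has probability at least `1 / 2`. The gaps
`d j = ℙ(k - j) - ℙ(k + 1 + j)` between reflected binomial masses change sign at most once, from
positive to negative, and the first moment of the binomial law gives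
`∑ (2 j + 1) d j = 2 (k - η m) + 1 > 0`. As the weights `2 j + 1` increase, also `∑ d j ≥ 0`.
-/

open MeasureTheory ProbabilityTheory
open scoped unitInterval

section SingleCrossing

lemma sum_nonneg_of_single_crossing {d w : ℕ → ℝ} {s : Finset ℕ} (hw : Monotone w)
    (hw_pos : ∀ j, 0 < w j) (hd : Monotone fun j => d j ≤ 0)
    (hsum : 0 ≤ ∑ j ∈ s, w j * d j) : 0 ≤ ∑ j ∈ s, d j := by
  by_cases hcross : ∃ j, d j ≤ 0
  · obtain ⟨J, hJ, hJ_min⟩ : ∃ J, d J ≤ 0 ∧ ∀ j < J, 0 < d j := by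
      classical
      exact ⟨Nat.find hcross, Nat.find_spec hcross, fun j hj => not_le.1 (Nat.find_min hcross hj)⟩
    have hterm (j : ℕ) : w j * d j ≤ w J * d j := by
      rcases lt_or_ge j J with hj | hj
      · exact mul_le_mul_of_nonneg_right (hw hj.le) (hJ_min j hj).le
      · exact mul_le_mul_of_nonpos_right (hw hj) (hd hj hJ)
    refine nonneg_of_mul_nonneg_right ?_ (hw_pos J)
    calc 0 ≤ ∑ j ∈ s, w j * d j := hsum
      _ ≤ ∑ j ∈ s, w J * d j := Finset.sum_le_sum fun j _ => hterm j
      _ = w J * ∑ j ∈ s, d j := (Finset.mul_sum ..).symm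
  · push Not at hcross
    exact Finset.sum_nonneg fun j _ => (hcross j).le

-- `β j / α j` is the factor by which `c j / a j` changes from `j` to `j + 1`. A ratio that starts
-- below `1` can only reach `1` once a factor is at least `1`, and so are all later factors.
lemma le_succ_of_cross_ratio {a c α β : ℕ → ℝ} {k : ℕ} (ha : ∀ j ≤ k, 0 < a j)
    (hc : ∀ j, 0 ≤ c j) (hα : ∀ j < k, 0 < α j) (hαβ : Monotone fun j => α j ≤ β j)
    (hratio : ∀ j < k, α j * (a j * c (j + 1)) = β j * (a (j + 1) * c j)) (h0 : c 0 < a 0)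
    {j : ℕ} (hj : j < k) (hac : a j ≤ c j) : a (j + 1) ≤ c (j + 1) := by
  have factor_of_crossing {j : ℕ} (hj : j < k) (hca : c j < a j) (h : a (j + 1) ≤ c (j + 1)) :
      α j ≤ β j := by
    have hpos := mul_pos (hα j hj) (ha j hj.le)
    have hprod : α j * a j ≤ β j * c j := by
      refine le_of_mul_le_mul_right ?_ (ha (j + 1) hj)
      linarith [hratio j hj, mul_le_mul_of_nonneg_left h hpos.le]
    by_contra! hβα
    linarith [mul_le_mul_of_nonneg_right hβα.le (hc j), mul_lt_mul_of_pos_left hca (hα j hj)]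
  have factor_of_le {j : ℕ} (hj : j < k) (h : a j ≤ c j) : α j ≤ β j := by
    induction j with
    | zero => exact absurd h h0.not_ge
    | succ j ih =>
      refine hαβ j.le_succ ?_
      rcases le_or_gt (a j) (c j) with hac | hca
      · exact ih (by omega) hac
      · exact factor_of_crossing (by omega) hca h
  have hfactor := factor_of_le hj hac
  refine le_of_mul_le_mul_left ?_ (mul_pos (hα j hj) (ha j hj.le))
  calc α j * a j * a (j + 1) ≤ β j * c j * a (j + 1) :=
        mul_le_mul_of_nonneg_right
          (mul_le_mul hfactor hac (ha j hj.le).le ((hα j hj).le.trans hfactor)) (ha _ hj).le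
    _ = α j * a j * c (j + 1) := by linarith [hratio j hj]

lemma sum_range_ite_reflect {M : Type*} [AddCommMonoid M] {f : ℕ → M} {k N : ℕ} (hk : k < N) :
    ∑ j ∈ Finset.range N, (if j ≤ k then f (k - j) else 0) = ∑ i ∈ Finset.range (k + 1), f i := by
  rw [← Finset.sum_filter, ← Finset.sum_range_reflect f (k + 1)]
  refine Finset.sum_congr ?_ fun j _ => by congr 1
  ext j
  simp only [Finset.mem_filter, Finset.mem_range]
  omega

end SingleCrossing

section Binomial

variable {n k : ℕ} {x : I}

lemma binomial_singleton_eq_mul_ofReal_pow (n k : ℕ) (x : I) :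
    Bin(n, x) {k} =
      n.choose k * (ENNReal.ofReal x ^ k * ENNReal.ofReal (1 - x) ^ (n - k)) := by
  have hx0 : (0 : ℝ) ≤ x := x.2.1
  have hx1 : (0 : ℝ) ≤ 1 - x := sub_nonneg.2 x.2.2
  rw [binomial_singleton, mul_assoc, ENNReal.ofReal_mul (Nat.cast_nonneg _),
    ENNReal.ofReal_mul (pow_nonneg hx0 _), ENNReal.ofReal_natCast, ENNReal.ofReal_pow hx0,
    ENNReal.ofReal_pow hx1]

lemma le_of_mem_support_binomial (hk : k ∈ Bin(n, x).toPMF.support) : k ≤ n := by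
  by_contra! h
  apply hk
  simp [Measure.toPMF_apply, binomial_singleton, Nat.choose_eq_zero_of_lt h]

lemma binomial_real_singleton_eq_zero (h : n < k) : Bin(n, x).real {k} = 0 := by
  simp [binomial_real_singleton, Nat.choose_eq_zero_of_lt h]

lemma binomial_real_singleton_pos (hx : x ∈ Set.Ioo 0 1) (h : k ≤ n) :
    0 < Bin(n, x).real {k} := by
  have hx0 : (0 : ℝ) < x := hx.1
  have hx1 : (0 : ℝ) < 1 - x := sub_pos.2 hx.2
  have := Nat.choose_pos h
  rw [binomial_real_singleton]
  positivity

lemma binomial_real_singleton_succ (n k : ℕ) (x : I) :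
    Bin(n, x).real {k + 1} * ((k + 1) * (1 - x)) = Bin(n, x).real {k} * ((n - k) * x) := by
  rcases lt_trichotomy k n with h | rfl | h
  · obtain ⟨l, rfl⟩ := Nat.exists_eq_add_of_lt h
    have hchoose : ((k + l + 1).choose (k + 1) : ℝ) * (k + 1) =
        (k + l + 1).choose k * ((k + l + 1 : ℕ) - k) := by
      rw [← Nat.cast_sub h.le]
      exact_mod_cast Nat.choose_succ_right_eq (k + l + 1) k
    rw [binomial_real_singleton, binomial_real_singleton,
      show k + l + 1 - k = l + 1 by omega, show k + l + 1 - (k + 1) = l by omega]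
    linear_combination (x : ℝ) ^ (k + 1) * (1 - (x : ℝ)) ^ (l + 1) * hchoose
  · simp [binomial_real_singleton_eq_zero]
  · simp [binomial_real_singleton_eq_zero h,
      binomial_real_singleton_eq_zero (h.trans k.lt_succ_self)]

lemma sum_binomial_real_singleton (n : ℕ) (x : I) :
    ∑ i ∈ Finset.range (n + 1), Bin(n, x).real {i} = 1 := by
  simpa [Polynomial.eval_finsetSum, bernsteinPolynomial, binomial_real_singleton]
    using congrArg (Polynomial.eval (x : ℝ)) (bernsteinPolynomial.sum ℝ n)

lemma sum_mul_binomial_real_singleton (n : ℕ) (x : I) :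
    ∑ i ∈ Finset.range (n + 1), i * Bin(n, x).real {i} = n * x := by
  simpa [Polynomial.eval_finsetSum, bernsteinPolynomial, binomial_real_singleton]
    using congrArg (Polynomial.eval (x : ℝ)) (bernsteinPolynomial.sum_smul ℝ n)

/-- The signed difference between the masses that `Bin(n, x)` gives to the points `k - j` and
`k + 1 + j`, which are reflections of each other in `k + 1 / 2`. For `j > k`, where the first point
would be negative and `k - j` is truncated, the first mass is taken to be `0`. -/
noncomputable def binomialGap (n k : ℕ) (x : I) (j : ℕ) : ℝ :=
  (if j ≤ k then Bin(n, x).real {k - j} else 0) - Bin(n, x).real {k + 1 + j}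

lemma sum_mul_binomialGap {f g : ℕ → ℝ} (x : I) (hk : k ≤ n) (hlow : ∀ j ≤ k, f (k - j) = g j)
    (hhigh : ∀ j, f (k + 1 + j) = -g j) :
    ∑ j ∈ Finset.range (n + 1), g j * binomialGap n k x j =
      ∑ i ∈ Finset.range (n + 1), f i * Bin(n, x).real {i} := by
  have hleft : ∑ j ∈ Finset.range (n + 1), g j * (if j ≤ k then Bin(n, x).real {k - j} else 0) =
      ∑ i ∈ Finset.range (k + 1), f i * Bin(n, x).real {i} := by
    rw [← sum_range_ite_reflect (Nat.lt_succ_of_le hk)]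
    refine Finset.sum_congr rfl fun j _ => ?_
    split_ifs with hj
    · rw [hlow j hj]
    · rw [mul_zero]
  have hright : ∑ i ∈ Finset.range (n + 1), f i * Bin(n, x).real {i} =
      ∑ i ∈ Finset.range (k + 1 + (n + 1)), f i * Bin(n, x).real {i} := by
    refine Finset.sum_subset (Finset.range_subset_range.2 (by omega)) fun i _ hi => ?_
    rw [binomial_real_singleton_eq_zero (by simpa using hi), mul_zero]
  rw [hright, Finset.sum_range_add (fun i => f i * Bin(n, x).real {i}), ← hleft,
    ← Finset.sum_add_distrib]
  refine Finset.sum_congr rfl fun j _ => ?_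
  rw [binomialGap, hhigh]
  ring

lemma sum_binomialGap (x : I) (hk : k ≤ n) :
    ∑ j ∈ Finset.range (n + 1), binomialGap n k x j =
      2 * ∑ i ∈ Finset.range (k + 1), Bin(n, x).real {i} - 1 := by
  have hsign := sum_mul_binomialGap (f := fun i => if i ≤ k then 1 else -1) (g := fun _ => 1) x hk
    (fun j _ => if_pos (k.sub_le j)) (fun j => if_neg (by omega))
  have hterm (i : ℕ) : (if i ≤ k then 1 else -1) * Bin(n, x).real {i} =
      2 * (if i ≤ k then Bin(n, x).real {i} else 0) - Bin(n, x).real {i} := by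
    split_ifs <;> ring
  have hrange : {i ∈ Finset.range (n + 1) | i ≤ k} = Finset.range (k + 1) := by
    ext i
    simp only [Finset.mem_filter, Finset.mem_range]
    omega
  simpa only [one_mul, hterm, Finset.sum_sub_distrib, ← Finset.mul_sum, ← Finset.sum_filter, hrange,
    sum_binomial_real_singleton] using hsign

lemma sum_odd_mul_binomialGap (x : I) (hk : k ≤ n) :
    ∑ j ∈ Finset.range (n + 1), (2 * j + 1) * binomialGap n k x j = 2 * (k - n * x) + 1 := by
  rw [sum_mul_binomialGap (f := fun i => 2 * k + 1 - 2 * i) x hk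
    (fun j hj => by push_cast [hj]; ring) (fun j => by push_cast; ring)]
  simp only [sub_mul, Finset.sum_sub_distrib, mul_assoc (2 : ℝ), ← Finset.mul_sum,
    sum_binomial_real_singleton, sum_mul_binomial_real_singleton]
  ring

lemma binomial_real_singleton_cross_ratio (n : ℕ) (x : I) {j : ℕ} (hj : j < k) :
    ((k + 1) ^ 2 - (j + 1) ^ 2) * (1 - x : ℝ) ^ 2 *
        (Bin(n, x).real {k - j} * Bin(n, x).real {k + 1 + (j + 1)}) =
      ((n - k) ^ 2 - (j + 1) ^ 2) * (x : ℝ) ^ 2 *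
        (Bin(n, x).real {k - (j + 1)} * Bin(n, x).real {k + 1 + j}) := by
  obtain ⟨i, rfl⟩ := Nat.exists_eq_add_of_lt hj
  have hlow := binomial_real_singleton_succ n i x
  have hhigh := binomial_real_singleton_succ n (j + i + 1 + 1 + j) x
  simp only [show j + i + 1 - j = i + 1 by omega, show j + i + 1 - (j + 1) = i by omega,
    show j + i + 1 + 1 + (j + 1) = j + i + 1 + 1 + j + 1 by omega]
  push_cast at hhigh ⊢
  linear_combination (Bin(n, x).real {j + i + 1 + 1 + j + 1} *
    ((j + i + 1 + 1 + j + 1) * (1 - x))) * hlow +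
    (Bin(n, x).real {i} * ((n - i) * x)) * hhigh

lemma binomial_real_reflect_le_succ (hx : x ∈ Set.Ioo 0 1) (hk : k ≤ n) (hmean : (n * x : ℝ) ≤ k)
    {j : ℕ} (hj : j < k) (hle : Bin(n, x).real {k - j} ≤ Bin(n, x).real {k + 1 + j}) :
    Bin(n, x).real {k - (j + 1)} ≤ Bin(n, x).real {k + 1 + (j + 1)} := by
  have hx0 : (0 : ℝ) < x := hx.1
  have hx1 : (0 : ℝ) < 1 - x := sub_pos.2 hx.2
  have hodds_sq : ((n - k) * (x : ℝ)) ^ 2 < ((k + 1) * (1 - x)) ^ 2 :=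
    pow_lt_pow_left₀ (by linarith) (mul_nonneg (sub_nonneg.2 (mod_cast hk)) hx0.le) two_ne_zero
  refine le_succ_of_cross_ratio (a := fun j => Bin(n, x).real {k - j})
    (c := fun j => Bin(n, x).real {k + 1 + j})
    (α := fun j => ((k + 1) ^ 2 - (j + 1) ^ 2) * (1 - x) ^ 2)
    (β := fun j => ((n - k) ^ 2 - (j + 1) ^ 2) * x ^ 2)
    (fun j _ => binomial_real_singleton_pos hx (by omega)) (fun _ => measureReal_nonneg)
    (fun j hj => ?_) (monotone_nat_of_le_succ fun j hαβ => ?_)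
    (fun j hj => binomial_real_singleton_cross_ratio n x hj) ?_ hj hle
  · have hjk : (j : ℝ) < k := mod_cast hj
    have : (0 : ℝ) < (k + 1) ^ 2 - (j + 1) ^ 2 := by nlinarith
    positivity
  · have hx_half : 0 ≤ (1 - x : ℝ) ^ 2 - x ^ 2 := by
      refine (pos_of_mul_pos_right (a := ((j : ℝ) + 1) ^ 2) ?_ (by positivity)).le
      linarith
    push_cast
    linarith [mul_nonneg (by positivity : (0 : ℝ) ≤ 2 * j + 3) hx_half]
  · refine lt_of_mul_lt_mul_right ?_ (mul_pos (Nat.cast_add_one_pos k) hx1).le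
    simp only [add_zero, tsub_zero]
    rw [binomial_real_singleton_succ]
    exact mul_lt_mul_of_pos_left (by linarith) (binomial_real_singleton_pos hx hk)

lemma monotone_binomialGap_nonpos (hx : x ∈ Set.Ioo 0 1) (hk : k ≤ n) (hmean : (n * x : ℝ) ≤ k) :
    Monotone fun j => binomialGap n k x j ≤ 0 := by
  refine monotone_nat_of_le_succ fun j hj => ?_
  rcases lt_or_ge j k with hjk | hjk
  · rw [binomialGap, if_pos hjk.le, sub_nonpos] at hj
    rw [binomialGap, if_pos (Nat.succ_le_of_lt hjk), sub_nonpos]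
    exact binomial_real_reflect_le_succ hx hk hmean hjk hj
  · rw [binomialGap, if_neg (by omega), zero_sub, neg_nonpos]
    exact measureReal_nonneg

lemma binomial_real_Iic (n k : ℕ) (x : I) :
    Bin(n, x).real (Set.Iic k) = ∑ i ∈ Finset.range (k + 1), Bin(n, x).real {i} := by
  rw [sum_measureReal_singleton]
  congr 1
  ext i
  simp

theorem one_half_le_binomial_real_Iic (hmean : (n * x : ℝ) ≤ k) :
    1 / 2 ≤ Bin(n, x).real (Set.Iic k) := by
  rw [binomial_real_Iic]
  rcases x.2.1.eq_or_lt with hx0 | hx0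
  · have hmass : Bin(n, x).real {0} = 1 := by simp [← hx0]
    have := Finset.single_le_sum (f := fun i => Bin(n, x).real {i})
      (fun _ _ => measureReal_nonneg) (Finset.mem_range.2 k.succ_pos)
    linarith
  rcases le_or_gt n k with hnk | hkn
  · have := Finset.sum_le_sum_of_subset_of_nonneg (f := fun i => Bin(n, x).real {i})
      (Finset.range_subset_range.2 (Nat.succ_le_succ hnk)) fun _ _ _ => measureReal_nonneg
    linarith [sum_binomial_real_singleton n x]
  have hx1 : (x : ℝ) < 1 := by
    have : (k : ℝ) < n := mod_cast hkn
    by_contra! hx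
    nlinarith
  have hgap : 0 ≤ ∑ j ∈ Finset.range (n + 1), binomialGap n k x j := by
    refine sum_nonneg_of_single_crossing (w := fun j => 2 * j + 1) (fun i j hij => ?_)
      (fun j => by positivity) (monotone_binomialGap_nonpos ⟨hx0, hx1⟩ hkn.le hmean) ?_
    · have : (i : ℝ) ≤ j := mod_cast hij
      linarith
    · rw [sum_odd_mul_binomialGap x hkn.le]
      linarith
  linarith [sum_binomialGap x hkn.le]

lemma one_half_le_probEvent_binomial_Iic (hmean : (n * x : ℝ) ≤ k) :
    1 / 2 ≤ probEvent Bin(n, x).toPMF (Set.Iic k) := by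
  rw [probEvent, ← PMF.toMeasure_apply_eq_toOuterMeasure, Measure.toPMF_toMeasure,
    ← ofReal_measureReal, ← ENNReal.ofReal_one, ← ENNReal.ofReal_ofNat,
    ← ENNReal.ofReal_div_of_pos two_pos]
  exact ENNReal.ofReal_le_ofReal (one_half_le_binomial_real_Iic hmean)

end Binomial

section PMF

variable {α β : Type*}

lemma mul_probEvent_le_probEvent_bind {P : PMF α} {f : α → PMF β} {A : Set α} {E : Set β}
    {c : ℝ≥0∞} (hc : ∀ a ∈ A, c ≤ probEvent (f a) E) :
    c * probEvent P A ≤ probEvent (P.bind f) E := by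
  rw [probEvent, probEvent, PMF.toOuterMeasure_apply, PMF.toOuterMeasure_bind_apply,
    ← ENNReal.tsum_mul_left]
  refine ENNReal.tsum_le_tsum fun a => ?_
  by_cases ha : a ∈ A
  · rw [Set.indicator_of_mem ha, mul_comm]
    exact mul_le_mul_right (hc a ha) _
  · simp [ha]

lemma map_fst_apply (J : PMF (α × β)) (a : α) : J.map Prod.fst a = ∑' b, J (a, b) := by
  rw [PMF.map_apply, ENNReal.tsum_prod', tsum_eq_single a]
  · simp
  · intro a' ha'
    simp [ha'.symm]

lemma map_snd_apply (J : PMF (α × β)) (b : β) : J.map Prod.snd b = ∑' a, J (a, b) := by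
  rw [PMF.map_apply, ENNReal.tsum_prod']
  refine tsum_congr fun a => ?_
  rw [tsum_eq_single b]
  · simp
  · intro b' hb'
    simp [hb'.symm]

theorem exists_kernel_of_coupling {J : PMF (α × β)} {rel : α → β → Prop}
    (hJ : ∀ z ∈ J.support, rel z.1 z.2) (htotal : ∀ a, ∃ b, rel a b) :
    ∃ K : α → PMF β, (∀ a, ∀ b ∈ (K a).support, rel a b) ∧
      (J.map Prod.fst).bind K = J.map Prod.snd := by
  classical
  choose d hd using htotal
  have hne_top (a : α) : ∑' b, J (a, b) ≠ ∞ := by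
    rw [← map_fst_apply]
    exact PMF.apply_ne_top _ a
  let K (a : α) : PMF β :=
    if h : ∑' b, J (a, b) = 0 then PMF.pure (d a)
    else PMF.normalize (fun b => J (a, b)) h (hne_top a)
  have hdisintegrate (a : α) (b : β) : J.map Prod.fst a * K a b = J (a, b) := by
    rw [map_fst_apply]
    by_cases h : ∑' b, J (a, b) = 0
    · rw [h, zero_mul, ENNReal.tsum_eq_zero.1 h b]
    · simp only [K, dif_neg h, PMF.normalize_apply]
      rw [mul_left_comm, ENNReal.mul_inv_cancel h (hne_top a), mul_one]
  refine ⟨K, fun a b hb => ?_, ?_⟩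
  · by_cases h : ∑' b, J (a, b) = 0
    · simp only [K, dif_pos h, PMF.support_pure, Set.mem_singleton_iff] at hb
      exact hb ▸ hd a
    · simp only [K, dif_neg h, PMF.support_normalize] at hb
      exact hJ (a, b) hb
  · ext b
    simp_rw [PMF.bind_apply, hdisintegrate, map_snd_apply]

lemma tsum_bind_mul (P : PMF α) (f : α → PMF β) (h : β → ℝ≥0∞) :
    ∑' b, P.bind f b * h b = ∑' a, P a * ∑' b, f a b * h b := by
  simp_rw [PMF.bind_apply, ← ENNReal.tsum_mul_right, ← ENNReal.tsum_mul_left]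
  rw [ENNReal.tsum_comm]
  simp_rw [mul_assoc]

lemma tsum_map_mul (P : PMF α) (f : α → β) (h : β → ℝ≥0∞) :
    ∑' b, P.map f b * h b = ∑' a, P a * h (f a) := by
  classical
  rw [PMF.map, tsum_bind_mul]
  simp [PMF.pure_apply]

end PMF

section AddConv

variable {M α : Type*} [AddCommMonoid M]

/-- The law of `a + b` for independent draws `a ∼ P` and `b ∼ Q`: the additive convolution. -/
noncomputable def addConv (P Q : PMF M) : PMF M :=
  P.bind fun a => Q.map (a + ·)

/-- The operator sending `h` to `s ↦ 𝔼 h (s + a)` for `a ∼ P`. It turns convolutions of laws into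
products and mixtures into linear combinations. -/
noncomputable def avg (P : PMF M) : Module.End ℝ≥0∞ (M → ℝ≥0∞) where
  toFun h s := ∑' a, P a * h (s + a)
  map_add' g h := by
    ext s
    simp only [Pi.add_apply, mul_add, ENNReal.tsum_add]
  map_smul' c h := by
    ext s
    simp only [Pi.smul_apply, smul_eq_mul, RingHom.id_apply, mul_left_comm _ c,
      ENNReal.tsum_mul_left]

lemma avg_apply (P : PMF M) (h : M → ℝ≥0∞) (s : M) : avg P h s = ∑' a, P a * h (s + a) := rfl

lemma avg_injective : Function.Injective (avg : PMF M → Module.End ℝ≥0∞ (M → ℝ≥0∞)) := by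
  classical
  intro P Q hPQ
  ext a
  have h := congrFun (LinearMap.congr_fun hPQ (Pi.single a 1)) 0
  simpa [avg_apply, Pi.single_apply] using h

lemma avg_bind_apply (P : PMF α) (f : α → PMF M) (h : M → ℝ≥0∞) (s : M) :
    avg (P.bind f) h s = ∑' a, P a * avg (f a) h s :=
  tsum_bind_mul ..

lemma avg_bind_of_support_subset {P : PMF α} {s : Finset α} (hP : ∀ a ∈ P.support, a ∈ s)
    (f : α → PMF M) : avg (P.bind f) = ∑ a ∈ s, P a • avg (f a) := by
  ext h x
  rw [avg_bind_apply, tsum_eq_sum (s := s)]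
  · simp only [LinearMap.sum_apply, Finset.sum_apply, LinearMap.smul_apply, Pi.smul_apply,
      smul_eq_mul]
  · intro a ha
    rw [(PMF.apply_eq_zero_iff ..).2 (mt (hP a) ha), zero_mul]

lemma avg_map_apply (P : PMF α) (f : α → M) (h : M → ℝ≥0∞) (s : M) :
    avg (P.map f) h s = ∑' a, P a * h (s + f a) :=
  tsum_map_mul ..

lemma avg_map_mixture {p v r : PMF α} {c d : ℝ≥0∞} (hp : ∀ x, p x = c * v x + d * r x)
    (f : α → M) : avg (p.map f) = c • avg (v.map f) + d • avg (r.map f) := by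
  ext h s
  simp only [LinearMap.add_apply, LinearMap.smul_apply, Pi.add_apply, Pi.smul_apply, smul_eq_mul,
    avg_map_apply, hp, add_mul, mul_assoc, ENNReal.tsum_add, ENNReal.tsum_mul_left]

lemma avg_pure_zero : avg (PMF.pure (0 : M)) = 1 := by
  classical
  ext h s
  simp [avg_apply, PMF.pure_apply]

lemma avg_addConv (P Q : PMF M) : avg (addConv P Q) = avg P * avg Q := by
  ext h s
  rw [addConv, avg_bind_apply]
  refine tsum_congr fun a => ?_
  rw [avg_map_apply, avg_apply]
  simp only [add_assoc]

lemma avg_commute (P Q : PMF M) : Commute (avg P) (avg Q) := by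
  ext h s
  simp only [Module.End.mul_apply, avg_apply, ← ENNReal.tsum_mul_left]
  rw [ENNReal.tsum_comm]
  simp only [add_right_comm, mul_left_comm]

lemma mem_support_addConv {P Q : PMF M} {s : M} :
    s ∈ (addConv P Q).support ↔ ∃ a ∈ P.support, ∃ b ∈ Q.support, a + b = s := by
  simp [addConv]

end AddConv

section Iid

variable {X : Type*}

lemma iid_succ (p : PMF X) (n : ℕ) : iid p (n + 1) = addConv (iid p n) (p.map ({·})) := by
  simp only [iid, addConv, PMF.map_comp, Function.comp_def, add_comm _ {_}, Multiset.singleton_add]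

lemma avg_iid (p : PMF X) (n : ℕ) : avg (iid p n) = avg (p.map ({·})) ^ n := by
  induction n with
  | zero => exact avg_pure_zero
  | succ n ih => rw [iid_succ, avg_addConv, ih, pow_succ]

lemma card_of_mem_support_iid {p : PMF X} {n : ℕ} {S : Multiset X} (hS : S ∈ (iid p n).support) :
    Multiset.card S = n := by
  induction n generalizing S with
  | zero => simpa [iid] using hS
  | succ n ih =>
    obtain ⟨T, hT, _, hx, rfl⟩ := mem_support_addConv.1 (iid_succ p n ▸ hS)
    obtain ⟨x, -, rfl⟩ := (PMF.mem_support_map_iff ..).1 hx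
    simp [ih hT]

/-- The law of a sample consisting of `a` independent draws from `v` and `b` from `r`. -/
noncomputable def mixedSample (v r : PMF X) (a b : ℕ) : PMF (Multiset X) :=
  addConv (iid v a) (iid r b)

lemma avg_mixedSample (v r : PMF X) (a b : ℕ) :
    avg (mixedSample v r a b) = avg (v.map ({·})) ^ a * avg (r.map ({·})) ^ b := by
  rw [mixedSample, avg_addConv, avg_iid, avg_iid]

lemma mixedSample_zero_right (v r : PMF X) (a : ℕ) : mixedSample v r a 0 = iid v a :=
  avg_injective <| by rw [avg_mixedSample, pow_zero, mul_one, avg_iid]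

lemma addConv_mixedSample (v r : PMF X) (a b c d : ℕ) :
    addConv (mixedSample v r a b) (mixedSample v r c d) = mixedSample v r (a + c) (b + d) := by
  refine avg_injective ?_
  simp only [avg_addConv, avg_mixedSample, pow_add]
  exact ((avg_commute _ _).pow_pow _ _).mul_mul_mul_comm _ _

lemma card_of_mem_support_mixedSample {v r : PMF X} {a b : ℕ} {S : Multiset X}
    (hS : S ∈ (mixedSample v r a b).support) : Multiset.card S = a + b := by
  obtain ⟨T, hT, R, hR, rfl⟩ := mem_support_addConv.1 hS
  rw [Multiset.card_add, card_of_mem_support_iid hT, card_of_mem_support_iid hR]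

theorem iid_mixture {p v r : PMF X} {η : I}
    (hp : ∀ x, p x = ENNReal.ofReal (1 - η) * v x + ENNReal.ofReal η * r x) (m : ℕ) :
    iid p m = Bin(m, η).toPMF.bind fun j => mixedSample v r (m - j) j := by
  refine avg_injective ?_
  rw [avg_iid, avg_map_mixture hp, add_comm,
    (((avg_commute _ _).smul_left _).smul_right _).add_pow,
    avg_bind_of_support_subset fun j hj =>
      Finset.mem_range.2 (Nat.lt_succ_of_le (le_of_mem_support_binomial hj))]
  refine Finset.sum_congr rfl fun j _ => ?_
  rw [Measure.toPMF_apply, binomial_singleton_eq_mul_ofReal_pow, avg_mixedSample, smul_pow,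
    smul_pow, smul_mul_smul_comm, ← nsmul_eq_mul', ← Nat.cast_smul_eq_nsmul ℝ≥0∞, smul_smul,
    ((avg_commute _ _).pow_pow _ _).eq]

end Iid

section Removal

variable {X : Type*}

/-- The joint law of a sample `S` of size `m` with `j ∼ J` bad points, drawn from `r`, among points
drawn from `v`, and of what is left of it after removing `k` points, bad ones first. For `j ≤ k`
all `j` bad points and `k - j` good ones go; for `j > k` only `k` of the bad points do. The pair is
generated from the remaining sample `T` and the removed one `R`. -/
noncomputable def removalCoupling (v r : PMF X) (J : PMF ℕ) (m k : ℕ) :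
    PMF (Multiset X × Multiset X) :=
  J.bind fun j => (mixedSample v r (m - max j k) (j - k)).bind fun T =>
    (mixedSample v r (k - j) (min j k)).map fun R => (T + R, T)

lemma map_fst_removalCoupling (v r : PMF X) (J : PMF ℕ) {m k : ℕ} (hk : k ≤ m) :
    (removalCoupling v r J m k).map Prod.fst = J.bind fun j => mixedSample v r (m - j) j := by
  simp only [removalCoupling, PMF.map_bind, PMF.map_comp, Function.comp_def]
  refine congrArg J.bind (funext fun j => ?_)
  rw [← addConv, addConv_mixedSample]
  congr 1 <;> omega

lemma map_snd_removalCoupling (v r : PMF X) (J : PMF ℕ) (m k : ℕ) :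
    (removalCoupling v r J m k).map Prod.snd =
      J.bind fun j => mixedSample v r (m - max j k) (j - k) := by
  simp only [removalCoupling, PMF.map, Function.comp_def, PMF.bind_bind, PMF.pure_bind,
    PMF.bind_const]
  exact congrArg J.bind (funext fun j => PMF.bind_pure _)

lemma le_of_mem_support_removalCoupling {v r : PMF X} {J : PMF ℕ} {m k : ℕ}
    {z : Multiset X × Multiset X} (hz : z ∈ (removalCoupling v r J m k).support) : z.2 ≤ z.1 := by
  simp only [removalCoupling, PMF.mem_support_bind_iff, PMF.mem_support_map_iff] at hz
  obtain ⟨j, -, T, -, R, -, rfl⟩ := hz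
  exact Multiset.le_add_right T R

lemma card_snd_of_mem_support_removalCoupling {v r : PMF X} {J : PMF ℕ} {m k : ℕ}
    (hJ : ∀ j ∈ J.support, j ≤ m) {z : Multiset X × Multiset X}
    (hz : z ∈ (removalCoupling v r J m k).support) : Multiset.card z.2 = m - k := by
  simp only [removalCoupling, PMF.mem_support_bind_iff, PMF.mem_support_map_iff] at hz
  obtain ⟨j, hj, T, hT, R, -, rfl⟩ := hz
  have := hJ j hj
  rw [card_of_mem_support_mixedSample hT]
  omega

lemma exists_le_card_eq_sub (S : Multiset X) (k : ℕ) :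
    ∃ T ≤ S, Multiset.card T = Multiset.card S - k := by
  have hne : Multiset.powersetCard (Multiset.card S - k) S ≠ 0 := by
    rw [← Multiset.card_pos, Multiset.card_powersetCard]
    exact Nat.choose_pos (Nat.sub_le ..)
  obtain ⟨T, hT⟩ := Multiset.exists_mem_of_ne_zero hne
  exact ⟨T, Multiset.mem_powersetCard.1 hT⟩

theorem exists_subtractive_removal (v r : PMF X) {J : PMF ℕ} {m k : ℕ} (hk : k ≤ m)
    (hJ : ∀ j ∈ J.support, j ≤ m) :
    ∃ V : Adversary X, IsSubtractive V ∧
      (∀ S, Multiset.card S = m → ∀ T ∈ (V S).support, Multiset.card T = m - k) ∧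
      advPush V (J.bind fun j => mixedSample v r (m - j) j) =
        J.bind fun j => mixedSample v r (m - max j k) (j - k) := by
  obtain ⟨V, hV, hpush⟩ := exists_kernel_of_coupling
    (J := removalCoupling v r J m k)
    (rel := fun S T => T ≤ S ∧ (Multiset.card S = m → Multiset.card T = m - k))
    (fun z hz => ⟨le_of_mem_support_removalCoupling hz,
      fun _ => card_snd_of_mem_support_removalCoupling hJ hz⟩)
    (fun S => (exists_le_card_eq_sub S k).imp fun T hT => ⟨hT.1, fun hS => hS ▸ hT.2⟩)
  rw [map_fst_removalCoupling v r J hk, map_snd_removalCoupling] at hpush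
  exact ⟨V, fun S T hT => (hV S T hT).1, fun S hS T hT => (hV S T hT).2 hS, hpush⟩

theorem stmt15_general {p v r : PMF X} {η : I} {m k : ℕ}
    (hp : ∀ x, p x = ENNReal.ofReal (1 - η) * v x + ENNReal.ofReal η * r x)
    (hηk : (m * η : ℝ) ≤ k) (hkm : k ≤ m) :
    ∃ V : Adversary X, IsSubtractive V ∧
      (∀ S, Multiset.card S = m → ∀ T ∈ (V S).support, Multiset.card T = m - k) ∧
      ∀ E, probEvent (iid v (m - k)) E / 2 ≤ probEvent (advPush V (iid p m)) E := by
  obtain ⟨V, hV, hcard, hpush⟩ :=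
    exists_subtractive_removal v r hkm fun _ => le_of_mem_support_binomial (x := η)
  refine ⟨V, hV, hcard, fun E => ?_⟩
  have hgood (j : ℕ) (hj : j ∈ Set.Iic k) :
      mixedSample v r (m - max j k) (j - k) = iid v (m - k) := by
    rw [max_eq_right hj, Nat.sub_eq_zero_of_le hj, mixedSample_zero_right]
  rw [iid_mixture hp, hpush]
  calc probEvent (iid v (m - k)) E / 2 = probEvent (iid v (m - k)) E * (1 / 2) := by
        rw [mul_one_div]
    _ ≤ probEvent (iid v (m - k)) E * probEvent Bin(m, η).toPMF (Set.Iic k) :=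
        mul_le_mul_right (one_half_le_probEvent_binomial_Iic hηk) _
    _ ≤ _ := mul_probEvent_le_probEvent_bind fun j hj => by rw [hgood j hj]

end Removal

/-- From a subtractive oblivious adversary `V_obl` with fixed budget `η`
that defeats learner `A` on `p` (given `m − ⌈ηm⌉` i.i.d. samples from `V_obl(p)`), one
obtains a ground-truth-aware subtractive adaptive adversary `V_adp` with subtractive budget
`⌈ηm⌉/m` at sample size `m` that defeats `A` with probability more than `δ/2`. -/
theorem stmt15 {X : Type*} [Countable X] (Vobl : PMF X → PMF X) (η : ℝ)
    (hη : η ∈ Set.Ioo (0 : ℝ) 1)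
    (hsub : ∀ p : PMF X, ∃ r : PMF X, ∀ x,
      p x = ENNReal.ofReal (1 - η) * Vobl p x + ENNReal.ofReal η * r x)
    (α : ℝ) (hα : 1 ≤ α) (ε δ : ℝ)
    (hε : ε ∈ Set.Ioo (0 : ℝ) 1) (hδ : δ ∈ Set.Ioo (0 : ℝ) 1)
    (m : ℕ) (A : Multiset X → PMF X) (p : PMF X)
    (hfail : ENNReal.ofReal δ <
      probEvent (iid (Vobl p) (m - ⌈η * m⌉₊)) {S | α * η + ε < tv (A S) p}) :
    ∃ Vadp : Multiset X → PMF X → PMF (Multiset X),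
      (∀ S q T, T ∈ (Vadp S q).support → T ≤ S) ∧
      (∀ S : Multiset X, Multiset.card S = m → ∀ T ∈ (Vadp S p).support,
        Multiset.card T = m - ⌈η * m⌉₊) ∧
      ENNReal.ofReal (δ / 2) <
        probEvent ((iid p m).bind fun S => Vadp S p) {T | α * η + ε < tv (A T) p} := by
  obtain ⟨r, hr⟩ := hsub p
  obtain ⟨V, hV, hcard, hpush⟩ := stmt15_general (η := ⟨η, hη.1.le, hη.2.le⟩) hr
    ((mul_comm _ _).trans_le (Nat.le_ceil (η * m)))
    (Nat.ceil_le.2 (mul_le_of_le_one_left m.cast_nonneg hη.2.le))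
  refine ⟨fun S _ => V S, fun S _ => hV S, hcard, ?_⟩
  calc ENNReal.ofReal (δ / 2) = ENNReal.ofReal δ / 2 := by
        rw [ENNReal.ofReal_div_of_pos two_pos, ENNReal.ofReal_ofNat]
    _ < _ := ENNReal.div_lt_div_right two_ne_zero ENNReal.ofNat_ne_top hfail
    _ ≤ _ := hpush _
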